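/- Identify ℕ with ℕ × ℕ and for f : ℕ → ℕ and k ∈ ℕ set U(f,k) = {(m,n) : m ≥ k and n ≥ f(m)}. A free ultrafilter u on ℕ × ℕ fails to be a P-point if and only if there exists a bijection π of ℕ × ℕ such that U(f,k) belongs to the image ultrafilter {X : π⁻¹[X] ∈ u} for every f : ℕ → ℕ and every k ∈ ℕ. (Hence the permutation images of the nowhere dense set B = ⋂_{f,k} U(f,k)* consist exactly of the non-P-points of (ℕ×ℕ)*.) -/

import Mathlib

/-- A free ultrafilter: one containing no finite set. -/
def IsFreeUF {α : Type*} (u : Ultrafilter α) : Prop := ∀ A ∈ u, Set.Infinite A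

/-- A P-point: for every sequence of members there is a pseudo-intersection in the filter. -/
def IsPPoint {α : Type*} (u : Ultrafilter α) : Prop :=
  ∀ A : ℕ → Set α, (∀ n, A n ∈ u) → ∃ B ∈ u, ∀ n, (B \ A n).Finite

/-- `U(f,k) = {(m,n) : m ≥ k ∧ n ≥ f(m)}`. -/
def Uset (f : ℕ → ℕ) (k : ℕ) : Set (ℕ × ℕ) := {p : ℕ × ℕ | k ≤ p.1 ∧ f p.1 ≤ p.2}

/-!
Call a function finite-to-one along `u` if it has finite fibres on some member of `u`. Sending a
point to the first set of a sequence that omits it turns sequences of members of `u` into functions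
`g` with `g → ∞` along `u`, so `u` fails to be a P-point exactly when some such `g` is not
finite-to-one along `u`. After merging fibres, all fibres of `g` are infinite, and then a bijection
turns `g` into the first projection of `ℕ × ℕ`. A set has finite intersection with every column
exactly when it lies below the graph of some `f`, so for the first projection the two properties
of `g` say that every `U(f,k)` is in the image of `u`.
-/

open Filter Set

variable {α β γ : Type*}

/-- `g` is finite-to-one along `l`: it has finite fibres on some member of the filter `l`. P-points
are the ultrafilters along which every `ℕ`-valued function tending to infinity has this property. -/
def EventuallyFiniteToOne (g : α → β) (l : Filter α) : Prop :=
  ∃ s ∈ l, ∀ b, (s ∩ g ⁻¹' {b}).Finite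

theorem EventuallyFiniteToOne.of_comp {φ : β → γ} {g : α → β} {l : Filter α}
    (h : EventuallyFiniteToOne (φ ∘ g) l) : EventuallyFiniteToOne g l := by
  obtain ⟨s, hs, hfin⟩ := h
  refine ⟨s, hs, fun b => (hfin (φ b)).subset ?_⟩
  exact inter_subset_inter_right s fun x hx => congrArg φ hx

theorem eventuallyFiniteToOne_map_iff {e : α → β} (he : e.Injective) {g : β → γ} {l : Filter α} :
    EventuallyFiniteToOne g (map e l) ↔ EventuallyFiniteToOne (g ∘ e) l := by
  constructor
  · rintro ⟨s, hs, hfin⟩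
    exact ⟨e ⁻¹' s, hs, fun c => (hfin c).preimage (f := e) he.injOn⟩
  · rintro ⟨s, hs, hfin⟩
    refine ⟨e '' s, image_mem_map hs, fun c => ?_⟩
    rw [← image_inter_preimage]
    exact (hfin c).image e

theorem eventuallyFiniteToOne_fst_iff {l : Filter (β × ℕ)} :
    EventuallyFiniteToOne Prod.fst l ↔ ∃ f : β → ℕ, ∀ᶠ p in l, p.2 < f p.1 := by
  constructor
  · rintro ⟨s, hs, hfin⟩
    have bounded (b : β) : ∃ m, ∀ p ∈ s ∩ Prod.fst ⁻¹' {b}, p.2 ≤ m := by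
      obtain ⟨m, hm⟩ := ((hfin b).image Prod.snd).bddAbove
      exact ⟨m, forall_mem_image.mp hm⟩
    choose f hf using bounded
    exact ⟨fun b => f b + 1, mem_of_superset hs fun p hp => Nat.lt_succ_of_le (hf p.1 p ⟨hp, rfl⟩)⟩
  · rintro ⟨f, hf⟩
    refine ⟨_, hf, fun b => ((finite_Iio (f b)).image (Prod.mk b)).subset ?_⟩
    rintro ⟨_, m⟩ ⟨hm, rfl⟩
    exact mem_image_of_mem _ hm

theorem infinite_setOf_infinite_fiber {g : α → β} {l : Filter α} (hg : Tendsto g l cofinite)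
    (hfin : ¬ EventuallyFiniteToOne g l) : {b | (g ⁻¹' {b}).Infinite}.Infinite := by
  intro hinf
  refine hfin ⟨_, hg hinf.compl_mem_cofinite, fun b => ?_⟩
  obtain hempty | ⟨x, hx, rfl⟩ :=
    (g ⁻¹' {b | (g ⁻¹' {b}).Infinite}ᶜ ∩ g ⁻¹' {b}).eq_empty_or_nonempty
  · exact hempty ▸ finite_empty
  · exact (not_not.mp hx).inter_of_right _

theorem tendsto_natCount_atTop {p : ℕ → Prop} [DecidablePred p] (hp : {n | p n}.Infinite) :
    Tendsto (Nat.count p) atTop atTop :=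
  tendsto_atTop_atTop_of_monotone (Nat.count_monotone p) fun n =>
    ⟨Nat.nth p n, (Nat.count_nth_of_infinite hp n).ge⟩

theorem exists_infinite_fibers_of_not_eventuallyFiniteToOne {g : α → ℕ} {l : Filter α}
    (hg : Tendsto g l atTop) (hfin : ¬ EventuallyFiniteToOne g l) :
    ∃ h : α → ℕ, (∀ n, (h ⁻¹' {n}).Infinite) ∧ Tendsto h l atTop ∧
      ¬ EventuallyFiniteToOne h l := by
  classical
  let p (n : ℕ) : Prop := (g ⁻¹' {n}).Infinite
  have hp : {n | p n}.Infinite :=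
    infinite_setOf_infinite_fiber (Nat.cofinite_eq_atTop ▸ hg) hfin
  -- `Nat.count p` merges each finite fibre of `g` into the next infinite one.
  refine ⟨Nat.count p ∘ g, fun n => ?_, (tendsto_natCount_atTop hp).comp hg, mt .of_comp hfin⟩
  have hn : (g ⁻¹' {Nat.nth p n}).Infinite := Nat.nth_mem_of_infinite hp n
  refine hn.mono fun x hx => ?_
  have hx : g x = Nat.nth p n := hx
  simp [hx, Nat.count_nth_of_infinite hp]

theorem exists_equiv_prod_fst_comp_eq [Countable α] {g : α → β}
    (hg : ∀ b, (g ⁻¹' {b}).Infinite) : ∃ e : α ≃ β × ℕ, Prod.fst ∘ e = g := by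
  have fiberEquiv (b : β) : Nonempty ({x // g x = b} ≃ ℕ) := by
    have : Infinite {x // g x = b} := (hg b).to_subtype
    exact nonempty_equiv_of_countable
  let e (b : β) := (fiberEquiv b).some
  exact ⟨(Equiv.sigmaFiberEquiv g).symm.trans
    ((Equiv.sigmaCongrRight e).trans (Equiv.sigmaEquivProd β ℕ)), rfl⟩

theorem isPPoint_iff_forall_eventuallyFiniteToOne {u : Ultrafilter α} :
    IsPPoint u ↔ ∀ g : α → ℕ, Tendsto g u atTop → EventuallyFiniteToOne g u := by
  constructor
  · intro h g hg
    obtain ⟨B, hB, hfin⟩ := h (fun n => g ⁻¹' Ioi n) fun n => hg (Ioi_mem_atTop n)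
    exact ⟨B, hB, fun n => (hfin n).subset fun x ⟨hxB, hxn⟩ => ⟨hxB, (Eq.le hxn).not_gt⟩⟩
  · intro h A hA
    by_cases h_inter : ⋂ n, A n ∈ u
    · exact ⟨_, h_inter, fun n => by simp [sdiff_eq_empty.mpr (iInter_subset A n)]⟩
    have h_omitted : ∀ᶠ x in (u : Filter α), ∃ n, x ∉ A n := by
      filter_upwards [Ultrafilter.compl_mem_iff_notMem.mpr h_inter] with x hx
      simpa using hx
    -- On `⋂ n, A n`, which is not in `u`, this is the junk value `sInf ∅ = 0`.
    let g (x : α) : ℕ := sInf {n | x ∉ A n}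
    have hg : Tendsto g u atTop := by
      refine tendsto_atTop.mpr fun n => ?_
      have hlt : ∀ᶠ x in (u : Filter α), ∀ i ∈ Iio n, x ∈ A i :=
        (finite_Iio n).eventually_all.mpr fun i _ => hA i
      filter_upwards [h_omitted, hlt] with x hx hxlt
      exact not_lt.mp fun hgn => Nat.sInf_mem hx (hxlt _ hgn)
    obtain ⟨B, hB, hfin⟩ := h g hg
    refine ⟨B, hB, fun n => ((finite_Iic n).biUnion fun i _ => hfin i).subset ?_⟩
    rintro x ⟨hxB, hxn⟩
    exact mem_biUnion (Nat.sInf_le hxn : g x ≤ n) ⟨hxB, rfl⟩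

theorem forall_Uset_mem_iff {v : Ultrafilter (ℕ × ℕ)} :
    (∀ f k, Uset f k ∈ v) ↔
      Tendsto Prod.fst (v : Filter (ℕ × ℕ)) atTop ∧
        ¬ EventuallyFiniteToOne Prod.fst (v : Filter (ℕ × ℕ)) := by
  have mem_iff (f : ℕ → ℕ) (k : ℕ) : Uset f k ∈ v ↔
      (∀ᶠ p in (v : Filter (ℕ × ℕ)), k ≤ p.1) ∧ ∀ᶠ p in (v : Filter (ℕ × ℕ)), f p.1 ≤ p.2 :=
    eventually_and
  simp only [mem_iff, eventuallyFiniteToOne_fst_iff, tendsto_atTop, not_exists,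
    ← Ultrafilter.eventually_not, not_lt]
  exact ⟨fun h => ⟨fun k => (h 0 k).1, fun f => (h f 0).2⟩, fun h f k => ⟨h.1 k, h.2 f⟩⟩

theorem non_ppoint_iff_perm_image_contains_all_Usets_general [Countable α] (u : Ultrafilter α) :
    ¬ IsPPoint u ↔ ∃ π : α ≃ ℕ × ℕ, ∀ (f : ℕ → ℕ) (k : ℕ), Uset f k ∈ Ultrafilter.map π u := by
  simp only [forall_Uset_mem_iff, Ultrafilter.coe_map, tendsto_map'_iff,
    eventuallyFiniteToOne_map_iff (Equiv.injective _), isPPoint_iff_forall_eventuallyFiniteToOne,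
    not_forall, exists_prop]
  constructor
  · rintro ⟨g, hg, hfin⟩
    obtain ⟨h, hinf, hh⟩ := exists_infinite_fibers_of_not_eventuallyFiniteToOne hg hfin
    obtain ⟨π, rfl⟩ := exists_equiv_prod_fst_comp_eq hinf
    exact ⟨π, hh⟩
  · rintro ⟨π, hπ⟩
    exact ⟨_, hπ⟩

theorem non_ppoint_iff_perm_image_contains_all_Usets
    (u : Ultrafilter (ℕ × ℕ)) (hu : IsFreeUF u) :
    ¬ IsPPoint u ↔ ∃ π : Equiv.Perm (ℕ × ℕ), ∀ (f : ℕ → ℕ) (k : ℕ),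
      Uset f k ∈ Ultrafilter.map (⇑π) u :=
  non_ppoint_iff_perm_image_contains_all_Usets_general u
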